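/- The L_q²[0,1]-norms of the functions x ↦ x^{1/2} J_ν(q·j_{mν}·x;q²) satisfy ‖x^{1/2} J_ν(q·j_{mν}·x;q²)‖_{L_q²[0,1]} = (∫₀¹ x·J_ν(q·j_{mν}·x;q²)² d_q x)^{1/2} = O(q^m) as m → ∞; in particular, lim_{m→∞} ‖x^{1/2} J_ν(q·j_{mν}·x;q²)‖_{L_q²[0,1]} = 0. -/

import Mathlib

/-!
Write `J_ν(z;q²) = A z ^ ν F(z²)` with `F` entire, `F 0 = 1`, and put `p = q²`,
`a = q ^ (2(ν + 1)) = p ^ (ν + 1) < 1`. Comparing coefficients gives the q-difference equation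
`F(w) = (1 + a/p - p w) F(p w) - (a/p) F(p² w)` (`besselSeries_rec`). The estimate combines two of
its consequences.

*Growth of the zeros.* Iterating the equation, the Wronskian `F'(w) F(pw) - p F(w) F'(pw)` equals
`-p ∑ aⁱ F(pⁱ⁺¹ w)²`, so it is negative (`wronskian_neg`) and `F(w) / F(pw)` decreases wherever it is
defined. Hence between two zeros of `F` there is a zero of `F(p ·)` (`exists_zero_between`). As the
zeros of `F(p ·)` are the zeros of `F` divided by `p`, this forces `j_{k+1} ≥ j_k / q`
(`le_of_interlacing`), so `j_m ≥ j_1 q^{1-m}`.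

*The norm is `O(1 / j_m)`.* Up to the factor `A² (1 - q) / (q j_m)²`, the squared norm is
`w^{ν+1} ∑_{n ≥ 1} aⁿ F(pⁿ w)²` with `w = j_m²`. Since `F(w) = 0`, the equation shows inductively that
`|F(pⁿ w)| ≤ (a/2) |F(pⁿ⁺¹ w)|` as long as `pⁿ w` exceeds a constant `K` (`abs_le_of_rec`), so these
summands at least double from one to the next. The remaining ones, with `pⁿ w ≤ K`, are dominated by
a geometric series starting below a constant. The sum is therefore bounded independently of the zero
(`exists_uniform_bound`).
-/

open Filter

/-- The finite q-shifted factorial `(a;q)_n`. -/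
noncomputable def qPoch (a q : ℝ) : ℕ → ℝ := fun n => ∏ j ∈ Finset.range n, (1 - a * q ^ j)

/-- The infinite q-shifted factorial `(a;q)_∞`. -/
noncomputable def qPochInf (a q : ℝ) : ℝ := ∏' j : ℕ, (1 - a * q ^ j)

/-- The third Jackson (Hahn–Exton) q-Bessel function `J_ν(z;q²)` (base `q²`). -/
noncomputable def qBessel (ν q z : ℝ) : ℝ :=
  z ^ ν * (qPochInf (q ^ (2 * (ν + 1))) (q ^ 2) / qPochInf (q ^ 2) (q ^ 2)) *
    ∑' k : ℕ, ((-1 : ℝ) ^ k * q ^ (k * (k + 1)) * z ^ (2 * k) /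
      (qPoch (q ^ (2 * (ν + 1))) (q ^ 2) k * qPoch (q ^ 2) (q ^ 2) k))

/-- The Thomae–Jackson q-integral of `g` over `[0,1]`. -/
noncomputable def qInt (q : ℝ) (g : ℝ → ℝ) : ℝ := (1 - q) * ∑' n : ℕ, g (q ^ n) * q ^ n

/-! ### The power series behind the q-Bessel function -/

/-- The coefficients of the entire function `F` with `J_ν(z;q²) = const · z ^ ν · F (z²)`, where `a`
stands for `q ^ (2 * (ν + 1))`. -/
noncomputable def besselCoeff (a q : ℝ) (k : ℕ) : ℝ :=
  (-1 : ℝ) ^ k * q ^ (k * (k + 1)) / (qPoch a (q ^ 2) k * qPoch (q ^ 2) (q ^ 2) k)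

/-- The entire function `F` with `J_ν(z;q²) = const · z ^ ν · F (z²)`. -/
noncomputable def besselSeries (a q w : ℝ) : ℝ := ∑' k : ℕ, besselCoeff a q k * w ^ k

lemma one_sub_mul_pow_pos {a p : ℝ} (ha0 : 0 < a) (ha1 : a < 1) (hp0 : 0 < p) (hp1 : p < 1)
    (k : ℕ) : 0 < 1 - a * p ^ k := by
  have h1 : p ^ k ≤ 1 := pow_le_one₀ hp0.le hp1.le
  have h2 : 0 < p ^ k := pow_pos hp0 k
  nlinarith

lemma qPoch_pos {a p : ℝ} (ha0 : 0 < a) (ha1 : a < 1) (hp0 : 0 < p) (hp1 : p < 1)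
    (k : ℕ) : 0 < qPoch a p k :=
  Finset.prod_pos fun i _ => one_sub_mul_pow_pos ha0 ha1 hp0 hp1 i

lemma sq_lt_one_of_mem {q : ℝ} (hq0 : 0 < q) (hq1 : q < 1) : q ^ 2 < 1 := by nlinarith

lemma besselCoeff_ne_zero {a q : ℝ} (ha0 : 0 < a) (ha1 : a < 1) (hq0 : 0 < q) (hq1 : q < 1)
    (k : ℕ) : besselCoeff a q k ≠ 0 := by
  have hp0 : 0 < q ^ 2 := by positivity
  have hp1 := sq_lt_one_of_mem hq0 hq1
  have h1 := qPoch_pos ha0 ha1 hp0 hp1 k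
  have h2 := qPoch_pos hp0 hp1 hp0 hp1 k
  unfold besselCoeff
  have h3 : ((-1 : ℝ) ^ k) ≠ 0 := by simp
  have h4 : q ^ (k * (k + 1)) ≠ 0 := by positivity
  positivity

lemma besselCoeff_succ {a q : ℝ} (ha0 : 0 < a) (ha1 : a < 1) (hq0 : 0 < q) (hq1 : q < 1)
    (k : ℕ) : besselCoeff a q (k + 1) * ((1 - a * (q ^ 2) ^ k) * (1 - q ^ 2 * (q ^ 2) ^ k)) =
      -((q ^ 2) ^ (k + 1)) * besselCoeff a q k := by
  have hp0 : 0 < q ^ 2 := by positivity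
  have hp1 := sq_lt_one_of_mem hq0 hq1
  have h1 := (qPoch_pos ha0 ha1 hp0 hp1 k).ne'
  have h2 := (qPoch_pos hp0 hp1 hp0 hp1 k).ne'
  have h3 := (one_sub_mul_pow_pos ha0 ha1 hp0 hp1 k).ne'
  have h4 := (one_sub_mul_pow_pos hp0 hp1 hp0 hp1 k).ne'
  have e1 : qPoch a (q ^ 2) (k + 1) = qPoch a (q ^ 2) k * (1 - a * (q ^ 2) ^ k) :=
    Finset.prod_range_succ _ _
  have e2 : qPoch (q ^ 2) (q ^ 2) (k + 1) = qPoch (q ^ 2) (q ^ 2) k * (1 - q ^ 2 * (q ^ 2) ^ k) :=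
    Finset.prod_range_succ _ _
  have e3 : q ^ ((k + 1) * (k + 1 + 1)) = q ^ (k * (k + 1)) * (q ^ 2) ^ (k + 1) := by
    rw [← pow_mul, ← pow_add]; congr 1; ring
  unfold besselCoeff
  rw [e1, e2, e3]
  generalize qPoch a (q ^ 2) k = A at *
  generalize qPoch (q ^ 2) (q ^ 2) k = B at *
  generalize 1 - a * (q ^ 2) ^ k = C at *
  generalize 1 - q ^ 2 * (q ^ 2) ^ k = D at *
  field_simp
  ring

lemma besselCoeff_ratio_tendsto {a q : ℝ} (ha0 : 0 < a) (ha1 : a < 1) (hq0 : 0 < q)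
    (hq1 : q < 1) :
    Tendsto (fun n : ℕ => ‖besselCoeff a q n.succ‖ / ‖besselCoeff a q n‖) atTop (nhds 0) := by
  have hp0 : 0 < q ^ 2 := by positivity
  have hp1 := sq_lt_one_of_mem hq0 hq1
  have hpow : Tendsto (fun n : ℕ => (q ^ 2) ^ n) atTop (nhds 0) :=
    tendsto_pow_atTop_nhds_zero_of_lt_one hp0.le hp1
  have hlim : Tendsto (fun n : ℕ => (q ^ 2) ^ (n + 1) /
      ((1 - a * (q ^ 2) ^ n) * (1 - q ^ 2 * (q ^ 2) ^ n))) atTop (nhds 0) := by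
    have h1 := (tendsto_add_atTop_iff_nat 1).2 hpow
    have h2 := ((hpow.const_mul a).const_sub 1).mul ((hpow.const_mul (q ^ 2)).const_sub 1)
    simpa using! h1.div h2 (by simp)
  refine hlim.congr fun n => ?_
  have h3 := one_sub_mul_pow_pos ha0 ha1 hp0 hp1 n
  have h4 := one_sub_mul_pow_pos hp0 hp1 hp0 hp1 n
  have h := congrArg norm (besselCoeff_succ ha0 ha1 hq0 hq1 n)
  have hc := norm_pos_iff.2 (besselCoeff_ne_zero ha0 ha1 hq0 hq1 n)
  rw [norm_mul, norm_mul (-_), norm_neg, Real.norm_of_nonneg (mul_pos h3 h4).le,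
    Real.norm_of_nonneg (pow_pos hp0 _).le] at h
  rw [div_eq_div_iff (mul_pos h3 h4).ne' hc.ne']
  exact h.symm

lemma besselSeries_hasFPowerSeriesOnBall {a q : ℝ} (ha0 : 0 < a) (ha1 : a < 1) (hq0 : 0 < q)
    (hq1 : q < 1) : HasFPowerSeriesOnBall (besselSeries a q)
      (FormalMultilinearSeries.ofScalars ℝ (besselCoeff a q)) 0 ⊤ := by
  have hr : (FormalMultilinearSeries.ofScalars ℝ (besselCoeff a q)).radius = ⊤ :=
    FormalMultilinearSeries.ofScalars_radius_eq_top_of_tendsto ℝ _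
      (Eventually.of_forall (besselCoeff_ne_zero ha0 ha1 hq0 hq1))
      (besselCoeff_ratio_tendsto ha0 ha1 hq0 hq1)
  have h := (FormalMultilinearSeries.ofScalars ℝ (besselCoeff a q)).hasFPowerSeriesOnBall
    (by rw [hr]; exact ENNReal.zero_lt_top)
  rw [hr] at h
  have e : (FormalMultilinearSeries.ofScalars ℝ (besselCoeff a q)).sum = besselSeries a q := by
    funext w
    exact (FormalMultilinearSeries.ofScalars_sum_eq (besselCoeff a q) w).trans
      (tsum_congr fun k => by simp)
  rwa [e] at h

lemma besselSeries_summable {a q : ℝ} (ha0 : 0 < a) (ha1 : a < 1) (hq0 : 0 < q)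
    (hq1 : q < 1) (w : ℝ) : Summable fun k : ℕ => besselCoeff a q k * w ^ k := by
  have h := (besselSeries_hasFPowerSeriesOnBall ha0 ha1 hq0 hq1).hasSum (y := w) (by simp)
  refine h.summable.congr fun k => ?_
  simp [FormalMultilinearSeries.ofScalars]

lemma besselSeries_analyticOnNhd {a q : ℝ} (ha0 : 0 < a) (ha1 : a < 1) (hq0 : 0 < q)
    (hq1 : q < 1) : AnalyticOnNhd ℝ (besselSeries a q) Set.univ := by
  simpa using (besselSeries_hasFPowerSeriesOnBall ha0 ha1 hq0 hq1).analyticOnNhd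

lemma besselSeries_zero (a q : ℝ) : besselSeries a q 0 = 1 := by
  unfold besselSeries
  rw [tsum_eq_single 0]
  · simp [besselCoeff, qPoch]
  · intro k hk; simp [hk]

/-- The second-order q-difference equation of the q-Bessel function, in base `p = q²`. -/
lemma besselSeries_rec {a q : ℝ} (ha0 : 0 < a) (ha1 : a < 1) (hq0 : 0 < q) (hq1 : q < 1)
    (w : ℝ) : besselSeries a q w = (1 + a / q ^ 2 - q ^ 2 * w) * besselSeries a q (q ^ 2 * w) -
      a / q ^ 2 * besselSeries a q (q ^ 2 * (q ^ 2 * w)) := by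
  have hs := besselSeries_summable ha0 ha1 hq0 hq1
  have key : ∑' k : ℕ, (besselCoeff a q k * w ^ k
      - (1 + a / q ^ 2) * (besselCoeff a q k * (q ^ 2 * w) ^ k)
      + a / q ^ 2 * (besselCoeff a q k * (q ^ 2 * (q ^ 2 * w)) ^ k)) =
      -(q ^ 2 * w) * besselSeries a q (q ^ 2 * w) := by
    rw [(((hs w).sub ((hs _).mul_left _)).add ((hs _).mul_left _)).tsum_eq_zero_add]
    unfold besselSeries
    rw [← tsum_mul_left]
    have h0 : ∀ x y : ℝ, x * w ^ 0 - (1 + y) * (x * (q ^ 2 * w) ^ 0)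
        + y * (x * (q ^ 2 * (q ^ 2 * w)) ^ 0) = 0 := by intro x y; ring
    rw [h0, zero_add]
    refine tsum_congr fun k => ?_
    have h := besselCoeff_succ ha0 ha1 hq0 hq1 k
    have hq : q ^ 2 ≠ 0 := by positivity
    have e : besselCoeff a q (k + 1) * w ^ (k + 1)
      - (1 + a / q ^ 2) * (besselCoeff a q (k + 1) * (q ^ 2 * w) ^ (k + 1))
      + a / q ^ 2 * (besselCoeff a q (k + 1) * (q ^ 2 * (q ^ 2 * w)) ^ (k + 1)) =
      (besselCoeff a q (k + 1) * ((1 - a * (q ^ 2) ^ k) * (1 - q ^ 2 * (q ^ 2) ^ k)))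
        * w ^ (k + 1) := by
      generalize q ^ 2 = p at *
      simp only [mul_pow, pow_succ]
      field_simp
      ring
    rw [e, h]
    simp only [mul_pow, pow_succ]
    ring
  rw [((hs w).sub ((hs _).mul_left _)).tsum_add ((hs _).mul_left _),
    (hs w).tsum_sub ((hs _).mul_left _), tsum_mul_left, tsum_mul_left] at key
  unfold besselSeries at key ⊢
  linarith

/-! ### Interlacing of zeros -/

/-- For a solution `F` of the q-difference equation, the Wronskian of `F` and `F (p ·)` equals
`-p ∑ a ^ i F (p ^ (i + 1) w) ^ 2`, hence is negative. -/
lemma wronskian_neg {F : ℝ → ℝ} {a p : ℝ} (ha0 : 0 < a) (ha1 : a < 1) (hp0 : 0 < p)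
    (hp1 : p < 1) (hF : Differentiable ℝ F) (hF' : Continuous (deriv F)) (h0 : F 0 = 1)
    (hrec : ∀ w, F w = (1 + a / p - p * w) * F (p * w) - a / p * F (p * (p * w))) (w : ℝ) :
    deriv F w * F (p * w) - p * F w * deriv F (p * w) < 0 := by
  have hd : ∀ w, deriv F w = (1 + a / p - p * w) * (p * deriv F (p * w)) - p * F (p * w)
      - a / p * (p * (p * deriv F (p * (p * w)))) := by
    intro w
    have d1 : ∀ x, HasDerivAt (fun x => F (p * x)) (p * deriv F (p * x)) x := fun x => by
      have := (hF (p * x)).hasDerivAt.comp x ((hasDerivAt_id x).const_mul p)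
      exact this.congr_deriv (by rw [mul_one, mul_comm])
    have d2 : HasDerivAt (fun x => F (p * (p * x))) (p * (p * deriv F (p * (p * w)))) w := by
      have := (d1 (p * w)).comp w ((hasDerivAt_id w).const_mul p)
      exact this.congr_deriv (by rw [mul_one, mul_comm])
    have d3 : HasDerivAt (fun x => 1 + a / p - p * x) (-p) w := by
      simpa using ((hasDerivAt_id w).const_mul p).const_sub (1 + a / p)
    have d4 := (d3.mul (d1 w)).sub (d2.const_mul (a / p))
    have d5 := d4.congr_of_eventuallyEq (f₁ := F) (Eventually.of_forall hrec)
    rw [d5.deriv]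
    ring
  set W : ℝ → ℝ := fun w => deriv F w * F (p * w) - p * F w * deriv F (p * w) with hW
  have step : ∀ w, W w = -(p * F (p * w) ^ 2) + a * W (p * w) := by
    intro w
    simp only [hW]
    have e1 := hd w
    have e2 := hrec w
    rw [e1, e2]
    field_simp
    ring
  have iter : ∀ N : ℕ, W w = -(∑ i ∈ Finset.range N, a ^ i * (p * F (p ^ (i + 1) * w) ^ 2))
      + a ^ N * W (p ^ N * w) := by
    intro N
    induction N with
    | zero => simp
    | succ N ih =>
      rw [ih, Finset.sum_range_succ, step (p ^ N * w)]
      rw [show p * (p ^ N * w) = p ^ (N + 1) * w by ring]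
      ring
  have hpow : Tendsto (fun N : ℕ => p ^ N * w) atTop (nhds 0) := by
    simpa using (tendsto_pow_atTop_nhds_zero_of_lt_one hp0.le hp1).mul_const w
  have hWc : Continuous W := by
    have := hF.continuous
    fun_prop
  have hrem : Tendsto (fun N : ℕ => a ^ N * W (p ^ N * w)) atTop (nhds 0) := by
    simpa using (tendsto_pow_atTop_nhds_zero_of_lt_one ha0.le ha1).mul
      ((hWc.tendsto 0).comp hpow)
  have hsum : Tendsto (fun N : ℕ => ∑ i ∈ Finset.range N, a ^ i * (p * F (p ^ (i + 1) * w) ^ 2))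
      atTop (nhds (-W w)) := by
    have := hrem.sub_const (W w)
    rw [zero_sub] at this
    refine this.congr fun N => ?_
    linarith [iter N]
  -- `F` tends to `F 0 = 1` along `p ^ i * w`, so some term of the sum is nonzero.
  obtain ⟨i, hi⟩ : ∃ i : ℕ, 0 < F (p ^ (i + 1) * w) := by
    have h1 : Tendsto (fun N : ℕ => F (p ^ (N + 1) * w)) atTop (nhds 1) := by
      have := (hF.continuous.tendsto 0).comp ((tendsto_add_atTop_iff_nat 1).2 hpow)
      rwa [h0] at this
    exact (h1.eventually (lt_mem_nhds zero_lt_one)).exists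
  have hle : a ^ i * (p * F (p ^ (i + 1) * w) ^ 2) ≤ -W w := by
    refine ge_of_tendsto hsum ?_
    filter_upwards [eventually_gt_atTop i] with N hN
    exact Finset.single_le_sum (f := fun i => a ^ i * (p * F (p ^ (i + 1) * w) ^ 2))
      (fun j _ => by positivity) (Finset.mem_range.2 hN)
  have : 0 < a ^ i * (p * F (p ^ (i + 1) * w) ^ 2) := by positivity
  linarith

/-- Between two zeros of `F` lies a zero of `F (p ·)`: otherwise `F / F (p ·)` would be strictly
decreasing there by the sign of the Wronskian. -/
lemma exists_zero_between {F : ℝ → ℝ} {p : ℝ} (hF : Differentiable ℝ F)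
    (hW : ∀ w, deriv F w * F (p * w) - p * F w * deriv F (p * w) < 0) {u v : ℝ} (huv : u < v)
    (hu : F u = 0) (hv : F v = 0) : ∃ x, u < x ∧ x < v ∧ F (p * x) = 0 := by
  by_contra! hne
  have hne' : ∀ x ∈ Set.Icc u v, F (p * x) ≠ 0 := by
    intro x hx h
    rcases hx.1.eq_or_lt with rfl | h1
    · have := hW u; rw [h, hu] at this; simp at this
    rcases hx.2.eq_or_lt with rfl | h2
    · have := hW x; rw [h, hv] at this; simp at this
    exact hne x h1 h2 h
  have hd : ∀ x ∈ Set.Icc u v, HasDerivAt (fun x => F x / F (p * x))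
      ((deriv F x * F (p * x) - F x * (p * deriv F (p * x))) / F (p * x) ^ 2) x := by
    intro x hx
    have d1 : HasDerivAt (fun x => F (p * x)) (p * deriv F (p * x)) x := by
      have := (hF (p * x)).hasDerivAt.comp x ((hasDerivAt_id x).const_mul p)
      exact this.congr_deriv (by rw [mul_one, mul_comm])
    exact (hF x).hasDerivAt.div d1 (hne' x hx)
  have hanti := strictAntiOn_of_deriv_neg (convex_Icc u v)
    (fun x hx => (hd x hx).continuousAt.continuousWithinAt) (fun x hx => by
      have hx' := interior_subset hx
      rw [(hd x hx').deriv]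
      refine div_neg_of_neg_of_pos ?_ (by have := hne' x hx'; positivity)
      have := hW x
      linarith)
  have := hanti (Set.left_mem_Icc.2 huv.le) (Set.right_mem_Icc.2 huv.le) huv
  simp [hu, hv] at this

/-- If a strictly increasing enumeration `w 1 < w 2 < …` is such that every gap `(w k, w (k + 1))`
contains some `w i / p`, then `w` grows at least like `p ^ (-k)`. -/
lemma le_of_interlacing {w : ℕ → ℝ} {p : ℝ} (hp0 : 0 < p)
    (hmono : ∀ k, 1 ≤ k → w k < w (k + 1))
    (hgap : ∀ k, 1 ≤ k → ∃ i, 1 ≤ i ∧ p * w k < w i ∧ w i < p * w (k + 1)) (n : ℕ) :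
    w 1 ≤ p ^ n * w (n + 1) := by
  have hle : ∀ i k, 1 ≤ i → i ≤ k → w i ≤ w k := by
    intro i k hi hik
    induction k, hik using Nat.le_induction with
    | base => exact le_rfl
    | succ k hk ih => exact ih.trans (hmono k (hi.trans hk)).le
  have hlt : ∀ i k, 1 ≤ k → w k < w i → 1 ≤ i → k < i := by
    intro i k _ h hi
    by_contra! hc
    exact absurd (hle i k hi hc) (not_le.2 h)
  -- the index `i` of the zero in the `k`-th gap strictly increases with `k`, so `k ≤ i`
  have hidx : ∀ k, 1 ≤ k → ∃ i, k ≤ i ∧ w i < p * w (k + 1) := by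
    intro k hk
    induction k, hk using Nat.le_induction with
    | base => obtain ⟨i, h1, _, h2⟩ := hgap 1 le_rfl; exact ⟨i, h1, h2⟩
    | succ k hk ih =>
      obtain ⟨i, h1, h2⟩ := ih
      obtain ⟨i', h3, h4, h5⟩ := hgap (k + 1) (by omega)
      have := hlt i' i (by omega) (h2.trans h4) h3
      exact ⟨i', by omega, h5⟩
  induction n with
  | zero => simp
  | succ n ih =>
    obtain ⟨i, h1, h2⟩ := hidx (n + 1) (by omega)
    have h3 := (hle (n + 1) i (by omega) h1).trans h2.le
    calc w 1 ≤ p ^ n * w (n + 1) := ih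
      _ ≤ p ^ n * (p * w (n + 1 + 1)) := by gcongr
      _ = p ^ (n + 1) * w (n + 1 + 1) := by ring

/-! ### Smallness along the geometric sequence issuing from a zero -/

/-- Started at a zero, a solution of the recurrence grows fast from each term to the next as long
as the coefficient `p * x n` is large. -/
lemma abs_le_of_rec {x s : ℕ → ℝ} {b c p r K : ℝ} (hc : 0 < c) (hr : 0 < r)
    (hp0 : 0 < p) (hp1 : p < 1) (hK0 : 0 ≤ K) (hK : b + r + c / r ≤ K)
    (hx : ∀ n, x (n + 1) = p * x n) (hs : ∀ n, s n = (b - p * x n) * s (n + 1) - c * s (n + 2))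
    (h0 : s 0 = 0) (n : ℕ) (hn : K < x n) : |s n| ≤ r * |s (n + 1)| := by
  induction n with
  | zero => rw [h0]; simp; positivity
  | succ n ih =>
    have hxn := hx n
    have h1 : K < x n := by nlinarith
    have h2 := ih h1
    have h3 : (p * x n - b) * |s (n + 1)| ≤ |s n| + c * |s (n + 2)| := by
      have : |(p * x n - b) * s (n + 1)| = |-(s n) - c * s (n + 2)| := by
        rw [hs n]; congr 1; ring
      have h4 : |(p * x n - b) * s (n + 1)| = (p * x n - b) * |s (n + 1)| := by
        rw [abs_mul, abs_of_pos]
        have : 0 < c / r := by positivity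
        linarith
      rw [← h4, this]
      refine (abs_sub _ _).trans ?_
      rw [abs_neg, abs_mul, abs_of_pos hc]
    have h5 : c / r * |s (n + 1)| ≤ c * |s (n + 2)| := by
      have : c / r * |s (n + 1)| ≤ (p * x n - b - r) * |s (n + 1)| := by
        refine mul_le_mul_of_nonneg_right ?_ (abs_nonneg _)
        linarith
      nlinarith
    have h6 : c * |s (n + 1)| ≤ c * (r * |s (n + 2)|) := by
      calc c * |s (n + 1)| = r * (c / r * |s (n + 1)|) := by field_simp
        _ ≤ r * (c * |s (n + 2)|) := by gcongr
        _ = _ := by ring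
    exact le_of_mul_le_mul_left h6 hc

/-- The part of a geometric series consisting of the terms below `L` is at most `L / (1 - a)`,
whatever the first term. -/
lemma sum_truncated_geom_le {a X L : ℝ} (ha0 : 0 < a) (ha1 : a < 1) (hX : 0 ≤ X) (hL : 0 ≤ L)
    (N : ℕ) : ∑ n ∈ Finset.range N, (if X * a ^ n ≤ L then X * a ^ n else 0) ≤ L / (1 - a) := by
  have h1a : 0 < 1 - a := by linarith
  have hterm : ∀ n : ℕ, (if X * a ^ n ≤ L then X * a ^ n else 0) ≤
      (min (X * a ^ n) L - min (X * a ^ (n + 1)) L) / (1 - a) := by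
    intro n
    have hpos : 0 ≤ X * a ^ n := by positivity
    have hstep : X * a ^ (n + 1) = a * (X * a ^ n) := by ring
    have hle : X * a ^ (n + 1) ≤ X * a ^ n := by rw [hstep]; nlinarith
    rw [le_div_iff₀ h1a]
    split_ifs with h
    · rw [min_eq_left h, min_eq_left (hle.trans h), hstep]; linarith
    · have := min_le_min_right L hle
      linarith
  refine (Finset.sum_le_sum fun n _ => hterm n).trans ?_
  rw [← Finset.sum_div, Finset.sum_range_sub']
  refine div_le_div_of_nonneg_right ?_ h1a.le
  have h1 : 0 ≤ min (X * a ^ N) L := le_min (by positivity) hL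
  have h2 : min (X * a ^ 0) L ≤ L := min_le_right _ _
  linarith

/-- The sums `w ^ (ν + 1) * ∑ a ^ n F (p ^ n w) ^ 2` are bounded uniformly over the positive
zeros `w` of `F`. -/
lemma exists_uniform_bound {F : ℝ → ℝ} {a p ν : ℝ} (ha0 : 0 < a) (ha1 : a < 1) (hp0 : 0 < p)
    (hp1 : p < 1) (hν : -1 < ν) (hap : a = p ^ (ν + 1)) (hF : Continuous F)
    (hrec : ∀ w, F w = (1 + a / p - p * w) * F (p * w) - a / p * F (p * (p * w))) :
    ∃ B : ℝ, 0 < B ∧ ∀ w, 0 < w → F w = 0 → ∀ N : ℕ,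
      ∑ n ∈ Finset.range N, w ^ (ν + 1) * a ^ n * F (p ^ n * w) ^ 2 ≤ B := by
  -- the ratio `a / 2` makes the summands at least double from one term to the next
  set r : ℝ := a / 2 with hr
  set K : ℝ := 1 + a / p + r + a / p / r with hK
  have hr0 : 0 < r := by positivity
  have hK0 : 0 < K := by positivity
  obtain ⟨M, hM⟩ := (isCompact_Icc (a := (0 : ℝ)) (b := K)).exists_bound_of_continuousOn
    hF.continuousOn
  have hM' : ∀ x, 0 ≤ x → x ≤ K → F x ^ 2 ≤ M ^ 2 := by
    intro x h1 h2
    have := hM x ⟨h1, h2⟩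
    rw [Real.norm_eq_abs] at this
    exact sq_le_sq' (by linarith [neg_abs_le (F x)]) ((le_abs_self _).trans this)
  set L : ℝ := K ^ (ν + 1) with hL
  have hL0 : 0 < L := by positivity
  have h1a : 0 < 1 - a := by linarith
  refine ⟨M ^ 2 * L + 2 * (M ^ 2 * (L / (1 - a))) + 1, by positivity, ?_⟩
  intro w hw hFw N
  set X : ℝ := w ^ (ν + 1) with hX
  have hX0 : 0 < X := by positivity
  have hpw : ∀ n : ℕ, X * a ^ n = (p ^ n * w) ^ (ν + 1) := by
    intro n
    rw [Real.mul_rpow (by positivity) hw.le, hap, Real.rpow_pow_comm hp0.le, mul_comm]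
  have hiff : ∀ n : ℕ, X * a ^ n ≤ L ↔ p ^ n * w ≤ K := by
    intro n
    rw [hpw, hL]
    exact Real.rpow_le_rpow_iff (by positivity) hK0.le (by linarith)
  set G : ℕ → ℝ := fun n => X * a ^ n * F (p ^ n * w) ^ 2 with hG
  have hG0 : ∀ n, 0 ≤ G n := fun n => by simp only [hG]; positivity
  have hsmall : ∀ n, p ^ n * w ≤ K → G n ≤ M ^ 2 * (X * a ^ n) := by
    intro n hn
    have h1 := hM' _ (by positivity) hn
    have h2 : 0 ≤ X * a ^ n := by positivity
    simp only [hG]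
    nlinarith
  have hlarge : ∀ n, K < p ^ n * w → G n ≤ G (n + 1) / 2 := by
    intro n hn
    have h := abs_le_of_rec (x := fun n => p ^ n * w) (s := fun n => F (p ^ n * w))
      (b := 1 + a / p) (c := a / p) (p := p) (r := r) (K := K) (by positivity) hr0 hp0 hp1 hK0.le
      le_rfl (fun n => by ring) (fun n => by
        rw [hrec (p ^ n * w)]
        rw [show p ^ (n + 1) * w = p * (p ^ n * w) by ring,
          show p ^ (n + 2) * w = p * (p * (p ^ n * w)) by ring])
      (by simpa using hFw) n hn
    have h2 : F (p ^ n * w) ^ 2 ≤ r ^ 2 * F (p ^ (n + 1) * w) ^ 2 := by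
      rw [← sq_abs (F (p ^ n * w)), ← sq_abs (F (p ^ (n + 1) * w)), ← mul_pow]
      exact pow_le_pow_left₀ (abs_nonneg _) h 2
    have h3 : r ^ 2 ≤ a / 2 := by rw [hr]; nlinarith
    calc G n ≤ X * a ^ n * (a / 2 * F (p ^ (n + 1) * w) ^ 2) := by
          simp only [hG]
          refine mul_le_mul_of_nonneg_left (h2.trans ?_) (by positivity)
          exact mul_le_mul_of_nonneg_right h3 (sq_nonneg _)
      _ = G (n + 1) / 2 := by simp only [hG]; ring
  have hterm : ∀ n, G n ≤ G (n + 1) / 2 + M ^ 2 * (if X * a ^ n ≤ L then X * a ^ n else 0) := by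
    intro n
    split_ifs with h
    · have := hsmall n ((hiff n).1 h)
      linarith [hG0 (n + 1)]
    · have := hlarge n (not_le.1 fun h' => h ((hiff n).2 h'))
      linarith
  -- extend the partial sum to an index where the summand is already controlled
  obtain ⟨N', hN', hNN'⟩ : ∃ N' : ℕ, p ^ N' * w ≤ K ∧ N ≤ N' := by
    have hpow : Tendsto (fun N : ℕ => p ^ N * w) atTop (nhds 0) := by
      simpa using (tendsto_pow_atTop_nhds_zero_of_lt_one hp0.le hp1).mul_const w
    exact ((hpow.eventually (ge_mem_nhds hK0)).and (eventually_ge_atTop N)).exists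
  have hGN : G N' ≤ M ^ 2 * L := by
    refine (hsmall N' hN').trans ?_
    exact mul_le_mul_of_nonneg_left ((hiff N').2 hN') (sq_nonneg _)
  have hsum := Finset.sum_le_sum fun n (_ : n ∈ Finset.range N') => hterm n
  rw [Finset.sum_add_distrib, ← Finset.mul_sum, ← Finset.sum_div] at hsum
  have htel : ∑ n ∈ Finset.range N', G (n + 1) = ∑ n ∈ Finset.range N', G n + G N' - G 0 := by
    rw [← Finset.sum_range_succ, Finset.sum_range_succ' _ N']; ring
  have htr := mul_le_mul_of_nonneg_left (sum_truncated_geom_le ha0 ha1 hX0.le hL0.le N')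
    (sq_nonneg M)
  have hmono : ∑ n ∈ Finset.range N, G n ≤ ∑ n ∈ Finset.range N', G n :=
    Finset.sum_le_sum_of_subset_of_nonneg (Finset.range_mono hNN') fun n _ _ => hG0 n
  have := hG0 0
  linarith

/-! ### The norm estimate -/

lemma qBessel_eq (ν q z : ℝ) : qBessel ν q z =
    z ^ ν * (qPochInf (q ^ (2 * (ν + 1))) (q ^ 2) / qPochInf (q ^ 2) (q ^ 2)) *
      besselSeries (q ^ (2 * (ν + 1))) q (z ^ 2) := by
  unfold qBessel besselSeries besselCoeff
  congr 1
  refine tsum_congr fun k => ?_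
  rw [pow_mul]
  ring

theorem stmt15 (q ν : ℝ) (hq0 : 0 < q) (hq1 : q < 1) (hν : -1 < ν)
    (j : ℕ → ℝ)
    (hjpos : ∀ k, 1 ≤ k → 0 < j k)
    (hjzero : ∀ k, 1 ≤ k → qBessel ν q (j k) = 0)
    (hjmono : ∀ k, 1 ≤ k → j k < j (k + 1))
    (hjall : ∀ x, 0 < x → qBessel ν q x = 0 → ∃ k, 1 ≤ k ∧ x = j k)
    :
    (∃ C : ℝ, 0 < C ∧ ∃ M : ℕ, ∀ m, M ≤ m →
      Real.sqrt (qInt q (fun x => x * qBessel ν q (q * j m * x) ^ 2)) ≤ C * q ^ m) ∧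
    Tendsto (fun m : ℕ => Real.sqrt (qInt q (fun x => x * qBessel ν q (q * j m * x) ^ 2)))
      atTop (nhds 0) := by
  
  set a : ℝ := q ^ (2 * (ν + 1)) with ha
  set A : ℝ := qPochInf a (q ^ 2) / qPochInf (q ^ 2) (q ^ 2) with hA
  set F : ℝ → ℝ := besselSeries a q with hFdef
  have hJ : ∀ z, qBessel ν q z = z ^ ν * A * F (z ^ 2) := qBessel_eq ν q
  have ha0 : 0 < a := Real.rpow_pos_of_pos hq0 _
  have ha1 : a < 1 := Real.rpow_lt_one hq0.le hq1 (by linarith)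
  have hp0 : 0 < q ^ 2 := by positivity
  have hp1 := sq_lt_one_of_mem hq0 hq1
  have hap : a = (q ^ 2) ^ (ν + 1) := by
    rw [ha, Real.rpow_mul hq0.le, Real.rpow_two]
  have hFan := besselSeries_analyticOnNhd ha0 ha1 hq0 hq1
  have hFd : Differentiable ℝ F := fun x => (hFan x trivial).differentiableAt
  have hFd' : Continuous (deriv F) := by
    rw [← continuousOn_univ]; exact hFan.deriv.continuousOn
  have hrec := besselSeries_rec ha0 ha1 hq0 hq1
  have hW := wronskian_neg ha0 ha1 hp0 hp1 hFd hFd' (besselSeries_zero a q) hrec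
  -- The decay estimate alone implies the limit.
  suffices hmain : ∃ C : ℝ, 0 < C ∧ ∃ M : ℕ, ∀ m, M ≤ m →
      Real.sqrt (qInt q (fun x => x * qBessel ν q (q * j m * x) ^ 2)) ≤ C * q ^ m by
    refine ⟨hmain, ?_⟩
    obtain ⟨C, _, M, hM⟩ := hmain
    refine squeeze_zero' (Eventually.of_forall fun m => Real.sqrt_nonneg _)
      (eventually_atTop.2 ⟨M, hM⟩) ?_
    simpa using (tendsto_pow_atTop_nhds_zero_of_lt_one hq0.le hq1).const_mul C
  -- If the normalizing constant vanished, so would all the norms.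
  by_cases hA0 : A = 0
  · refine ⟨1, one_pos, 0, fun m _ => ?_⟩
    have : qInt q (fun x => x * qBessel ν q (q * j m * x) ^ 2) = 0 := by
      simp [qInt, hJ, hA0]
    rw [this, Real.sqrt_zero]
    positivity
  have hzero : ∀ x, 0 < x → (qBessel ν q x = 0 ↔ F (x ^ 2) = 0) := by
    intro x hx
    have := (Real.rpow_pos_of_pos hx ν).ne'
    rw [hJ]
    simp [this, hA0]
  have hFj : ∀ k, 1 ≤ k → F (j k ^ 2) = 0 := fun k hk => (hzero _ (hjpos k hk)).1 (hjzero k hk)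
  have hsqlt : ∀ k, 1 ≤ k → j k ^ 2 < j (k + 1) ^ 2 := fun k hk =>
    pow_lt_pow_left₀ (hjmono k hk) (hjpos k hk).le two_ne_zero
  have hgrow : ∀ n : ℕ, j 1 ^ 2 ≤ (q ^ 2) ^ n * j (n + 1) ^ 2 := by
    refine le_of_interlacing (w := fun k => j k ^ 2) hp0 hsqlt fun k hk => ?_
    obtain ⟨x, h1, h2, h3⟩ := exists_zero_between hFd hW (hsqlt k hk) (hFj k hk)
      (hFj (k + 1) (by omega))
    have hx : 0 < x := lt_of_le_of_lt (sq_nonneg _) h1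
    have hsq : Real.sqrt (q ^ 2 * x) ^ 2 = q ^ 2 * x := Real.sq_sqrt (by positivity)
    have hpos : 0 < Real.sqrt (q ^ 2 * x) := Real.sqrt_pos.2 (by positivity)
    obtain ⟨i, hi, hix⟩ := hjall _ hpos ((hzero _ hpos).2 (by rw [hsq]; exact h3))
    refine ⟨i, hi, ?_, ?_⟩
    · simp only [← hix, hsq]; gcongr
    · simp only [← hix, hsq]; gcongr
  obtain ⟨B, hB0, hB⟩ := exists_uniform_bound ha0 ha1 hp0 hp1 hν hap hFd.continuous hrec
  have hnorm : ∀ y, 0 < y → F (y ^ 2) = 0 →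
      qInt q (fun x => x * qBessel ν q (q * y * x) ^ 2) ≤ A ^ 2 * B / (q * y) ^ 2 := by
    intro y hy hFy
    have hterm : ∀ n : ℕ, q ^ n * qBessel ν q (q * y * q ^ n) ^ 2 * q ^ n =
        A ^ 2 / (q * y) ^ 2 *
          ((y ^ 2) ^ (ν + 1) * a ^ (n + 1) * F ((q ^ 2) ^ (n + 1) * y ^ 2) ^ 2) := by
      intro n
      have hz : 0 < q * y * q ^ n := by positivity
      have e1 : (q * y * q ^ n) ^ 2 = (q ^ 2) ^ (n + 1) * y ^ 2 := by ring
      have e2 : (y ^ 2) ^ (ν + 1) * a ^ (n + 1) =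
          ((q * y * q ^ n) ^ ν) ^ 2 * (q * y * q ^ n) ^ 2 := by
        have : ((q * y * q ^ n) ^ ν) ^ 2 * (q * y * q ^ n) ^ 2 =
            ((q * y * q ^ n) ^ 2) ^ (ν + 1) := by
          rw [← mul_pow, ← Real.rpow_add_one hz.ne', Real.rpow_pow_comm hz.le]
        rw [this, e1, Real.mul_rpow (by positivity) (by positivity), hap,
          Real.rpow_pow_comm hp0.le, mul_comm]
      rw [hJ, e2, ← e1]
      have : q * y ≠ 0 := by positivity
      field_simp
    have hsum : ∑' n : ℕ, q ^ n * qBessel ν q (q * y * q ^ n) ^ 2 * q ^ n ≤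
        A ^ 2 / (q * y) ^ 2 * B := by
      simp only [hterm]
      rw [tsum_mul_left]
      refine mul_le_mul_of_nonneg_left ?_ (by positivity)
      refine Real.tsum_le_of_sum_range_le (fun n => by positivity) fun N => ?_
      have := hB (y ^ 2) (by positivity) hFy (N + 1)
      rw [Finset.sum_range_succ'] at this
      refine le_trans ?_ this
      have : 0 ≤ (y ^ 2) ^ (ν + 1) * a ^ 0 * F ((q ^ 2) ^ 0 * y ^ 2) ^ 2 := by positivity
      linarith
    unfold qInt
    have h0 : 0 ≤ ∑' n : ℕ, q ^ n * qBessel ν q (q * y * q ^ n) ^ 2 * q ^ n :=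
      tsum_nonneg fun n => by positivity
    calc _ ≤ ∑' n : ℕ, q ^ n * qBessel ν q (q * y * q ^ n) ^ 2 * q ^ n := by
          refine mul_le_of_le_one_left h0 (by linarith)
      _ ≤ _ := hsum
      _ = _ := by ring
  have hj1 := hjpos 1 le_rfl
  refine ⟨Real.sqrt (A ^ 2 * B) / (q ^ 2 * j 1), by positivity, 1, fun m hm => ?_⟩
  obtain ⟨n, rfl⟩ : ∃ n, m = n + 1 := ⟨m - 1, by omega⟩
  have hjm := hjpos (n + 1) hm
  have hg : j 1 ≤ q ^ n * j (n + 1) := by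
    refine le_of_pow_le_pow_left₀ two_ne_zero (by positivity) ?_
    have := hgrow n
    calc j 1 ^ 2 ≤ _ := this
      _ = _ := by ring
  refine (Real.sqrt_le_sqrt (hnorm _ hjm (hFj _ hm))).trans ?_
  rw [Real.sqrt_div' _ (by positivity), Real.sqrt_sq (by positivity), div_mul_eq_mul_div,
    div_le_div_iff₀ (by positivity) (by positivity), mul_assoc]
  refine mul_le_mul_of_nonneg_left ?_ (Real.sqrt_nonneg _)
  calc q ^ 2 * j 1 ≤ q ^ 2 * (q ^ n * j (n + 1)) := by gcongr
    _ = _ := by ring
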